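/- Let x ∈ ℝ, δ > 0, λ ≥ 0 and ε > 0, and set λ⁻ = max{0, λ − ε} and λ⁺ = λ + ε. Then the limit lim_{n→∞} inf{ (1/n)·log Poisson(n·γ)({k ∈ ℕ : |k/n − x| < δ}) : γ ∈ (λ−ε, λ+ε) ∩ [0,∞) } exists in the extended reals and equals min{ −inf_{a ∈ (x−δ, x+δ)} ℓ(λ⁻; a), −inf_{a ∈ (x−δ, x+δ)} ℓ(λ⁺; a) }. -/

import Mathlib

open MeasureTheory Set
open scoped ENNReal NNReal

/-- The Fenchel-Legendre transform of the Poisson cumulant generating function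
with parameter `γ ∈ [0,∞)`, evaluated at `a ∈ ℝ`. -/
noncomputable def ell (γ a : ℝ) : ℝ≥0∞ :=
  if a < 0 then ⊤
  else if a = 0 then ENNReal.ofReal γ
  else if γ = 0 then ⊤
  else ENNReal.ofReal (γ - a + a * Real.log (a / γ))

/-! The probability that a Poisson(`θ`) variable lies in an integer interval `[a, b)` is a
quasiconcave function of `θ`: by telescoping, its derivative is
`(a * w θ a - b * w θ b) / θ`, where `w` denotes the Poisson weights, and this changes sign at most
once, from `+` to `-`. Hence for every `n ≥ 1` the infimum over `γ` is already the minimum of the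
values at the two endpoints, and it remains to find the limit for a fixed `γ`. For this, the law
of parameter `θ` is tilted at `k` to the law of parameter `k`, which gives `k` a mass between
`1 / (e * (k + 1))` and `1`; the tilting factor `exp (-ell θ k)` is homogeneous, so that only
`exp (-n * ell γ a)` survives on the exponential scale. -/

open Filter InformationTheory ProbabilityTheory ExpGrowth
open scoped Topology Nat

section Quasiconcave

theorem quasiconcaveOn_of_hasDerivAt {s : Set ℝ} {f f' : ℝ → ℝ} (hs : Convex ℝ s)
    (hf : ContinuousOn f s) (hf' : ∀ x ∈ interior s, HasDerivAt f (f' x) x)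
    (hsign : ∀ x ∈ interior s, ∀ y ∈ interior s, x < y → f' x < 0 → f' y ≤ 0) :
    QuasiconcaveOn ℝ s f := by
  refine fun r ↦ convex_iff_ordConnected.2 (ordConnected_def.2 ?_)
  rintro x ⟨hxs, hx⟩ z ⟨hzs, hz⟩ y ⟨hxy, hyz⟩
  have hsub : Icc x z ⊆ s := (convex_iff_ordConnected.1 hs).out hxs hzs
  have hint : Ioo x z ⊆ interior s := interior_Icc (a := x) (b := z) ▸ interior_mono hsub
  refine ⟨hsub ⟨hxy, hyz⟩, ?_⟩
  by_contra! hy : f y < r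
  have hxy' : x < y := hxy.lt_of_ne (by rintro rfl; exact hy.not_ge hx)
  have hyz' : y < z := hyz.lt_of_ne (by rintro rfl; exact hy.not_ge hz)
  obtain ⟨p, hp, hpf⟩ := exists_hasDerivAt_eq_slope f f' hxy'
    (hf.mono ((Icc_subset_Icc_right hyz).trans hsub))
    fun t ht ↦ hf' t (hint (Ioo_subset_Ioo_right hyz ht))
  obtain ⟨q, hq, hqf⟩ := exists_hasDerivAt_eq_slope f f' hyz'
    (hf.mono ((Icc_subset_Icc_left hxy).trans hsub))
    fun t ht ↦ hf' t (hint (Ioo_subset_Ioo_left hxy ht))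
  have hp_neg : f' p < 0 := hpf ▸ div_neg_of_neg_of_pos (by linarith) (by linarith)
  have hq_pos : 0 < f' q := hqf ▸ div_pos (by linarith) (by linarith)
  exact hq_pos.not_ge (hsign p (hint (Ioo_subset_Ioo_right hyz hp)) q
    (hint (Ioo_subset_Ioo_left hxy hq)) (hp.2.trans hq.1) hp_neg)

theorem iInf_eq_min_of_quasiconcaveOn {β : Type*} [CompleteLinearOrder β] [TopologicalSpace β]
    [OrderClosedTopology β] {f : ℝ → β} {a b : ℝ} {s t : Set ℝ} (hab : a < b)
    (hf : QuasiconcaveOn ℝ t f) (hfc : ContinuousOn f t) (hbt : Icc a b ⊆ t) (has : Ioo a b ⊆ s)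
    (hsb : s ⊆ Icc a b) : ⨅ x ∈ s, f x = min (f a) (f b) := by
  have ha : a ∈ Icc a b := left_mem_Icc.2 hab.le
  have hb : b ∈ Icc a b := right_mem_Icc.2 hab.le
  apply le_antisymm
  · have hclosure : ∀ x ∈ Icc a b, ⨅ x ∈ s, f x ≤ f x := by
      have hfc_Icc := hfc.mono hbt
      rw [← closure_Ioo hab.ne] at hfc_Icc ⊢
      exact fun x hx ↦ le_on_closure (fun y hy ↦ iInf₂_le y (has hy)) continuousOn_const hfc_Icc hx
    exact le_min (hclosure a ha) (hclosure b hb)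
  · refine le_iInf₂ fun x hx ↦ ?_
    have hconn := convex_iff_ordConnected.1 (hf (min (f a) (f b)))
    exact (hconn.out ⟨hbt ha, min_le_left _ _⟩ ⟨hbt hb, min_le_right _ _⟩ (hsb hx)).2

end Quasiconcave

section PoissonWeight

/-- The mass `e^{-θ} θ^k / k!` which the Poisson law of parameter `θ` gives to `k`, as a function
of an arbitrary real `θ`, so that it can be differentiated in `θ`. -/
noncomputable def poissonWeight (θ : ℝ) (k : ℕ) : ℝ := Real.exp (-θ) * θ ^ k / k !

lemma poissonWeight_nonneg {θ : ℝ} (hθ : 0 ≤ θ) (k : ℕ) : 0 ≤ poissonWeight θ k := by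
  unfold poissonWeight
  positivity

lemma continuous_poissonWeight (k : ℕ) : Continuous (poissonWeight · k) := by
  unfold poissonWeight
  fun_prop

lemma poissonWeight_succ (θ : ℝ) (k : ℕ) :
    (k + 1) * poissonWeight θ (k + 1) = θ * poissonWeight θ k := by
  simp only [poissonWeight, Nat.factorial_succ, Nat.cast_mul, Nat.cast_add_one, pow_succ]
  field_simp

lemma poissonWeight_eq_mul {θ : ℝ} (hθ : θ ≠ 0) (η : ℝ) (k : ℕ) :
    poissonWeight η k = Real.exp (θ - η) * (η / θ) ^ k * poissonWeight θ k := by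
  have hexp : Real.exp (-η) = Real.exp (θ - η) * Real.exp (-θ) := by
    rw [← Real.exp_add]; ring_nf
  rw [poissonWeight, poissonWeight, hexp, div_pow]
  field_simp

-- Written as a difference of consecutive terms, so that sums over intervals telescope.
lemma hasDerivAt_poissonWeight {θ : ℝ} (hθ : θ ≠ 0) (k : ℕ) :
    HasDerivAt (poissonWeight · k)
      ((k * poissonWeight θ k - (k + 1 : ℕ) * poissonWeight θ (k + 1)) / θ) θ := by
  have hexp : HasDerivAt (fun θ : ℝ ↦ Real.exp (-θ)) (-Real.exp (-θ)) θ := by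
    simpa using (hasDerivAt_neg θ).exp
  convert! (hexp.mul (hasDerivAt_pow k θ)).div_const (k ! : ℝ) using 1
  rw [Nat.cast_add_one, poissonWeight_succ, poissonWeight]
  rcases k with _ | k
  · simp only [Nat.cast_zero, pow_zero, mul_one, zero_mul, zero_sub, mul_zero, add_zero]
    field_simp
  · rw [Nat.add_sub_cancel, pow_succ]
    field_simp
    ring

lemma hasDerivAt_sum_poissonWeight {θ : ℝ} (hθ : θ ≠ 0) {a b : ℕ} (hab : a ≤ b) :
    HasDerivAt (fun θ ↦ ∑ k ∈ Finset.Ico a b, poissonWeight θ k)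
      ((a * poissonWeight θ a - b * poissonWeight θ b) / θ) θ := by
  convert! HasDerivAt.fun_sum fun k _ ↦ hasDerivAt_poissonWeight hθ k using 1
  rw [← Finset.sum_div, ← neg_inj, ← neg_div, neg_sub, ← neg_div, ← Finset.sum_neg_distrib]
  simp only [neg_sub]
  rw [Finset.sum_Ico_sub (fun k : ℕ ↦ k * poissonWeight θ k) hab]

-- The derivative can only change sign from `+` to `-`, because the ratio of the masses at `b` and
-- at `a` is proportional to `θ ^ (b - a)`.
lemma quasiconcaveOn_sum_poissonWeight {a b : ℕ} (hab : a ≤ b) :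
    QuasiconcaveOn ℝ (Ici 0) fun θ ↦ ∑ k ∈ Finset.Ico a b, poissonWeight θ k := by
  refine quasiconcaveOn_of_hasDerivAt (convex_Ici 0)
    (continuous_finsetSum _ fun k _ ↦ continuous_poissonWeight k).continuousOn
    (f' := fun θ ↦ (a * poissonWeight θ a - b * poissonWeight θ b) / θ) ?_ ?_
  · intro θ hθ
    rw [interior_Ici, mem_Ioi] at hθ
    exact hasDerivAt_sum_poissonWeight hθ.ne' hab
  · intro p hp q hq hpq hneg
    rw [interior_Ici, mem_Ioi] at hp hq
    have hp_lt : a * poissonWeight p a < b * poissonWeight p b := by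
      simpa [div_neg_iff, hp, hp.not_gt] using hneg
    have hpow : (q / p) ^ a ≤ (q / p) ^ b := pow_le_pow_right₀ ((one_le_div hp).2 hpq.le) hab
    refine div_nonpos_of_nonpos_of_nonneg (sub_nonpos.2 ?_) hq.le
    calc a * poissonWeight q a
        = Real.exp (p - q) * (q / p) ^ a * (a * poissonWeight p a) := by
          rw [poissonWeight_eq_mul hp.ne' q]; ring
      _ ≤ Real.exp (p - q) * (q / p) ^ b * (b * poissonWeight p b) := by
          have := poissonWeight_nonneg hp.le a
          gcongr
      _ = b * poissonWeight q b := by rw [poissonWeight_eq_mul hp.ne' q]; ring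

lemma poissonMeasure_coe_finset {θ : ℝ} (hθ : 0 ≤ θ) (S : Finset ℕ) :
    poissonMeasure θ.toNNReal S = ENNReal.ofReal (∑ k ∈ S, poissonWeight θ k) := by
  rw [← sum_measure_singleton, ENNReal.ofReal_sum_of_nonneg fun k _ ↦ poissonWeight_nonneg hθ k]
  simp only [poissonMeasure_singleton, Real.coe_toNNReal θ hθ, poissonWeight]

lemma continuousOn_poissonMeasure {S : Set ℕ} (hS : S.Finite) :
    ContinuousOn (fun θ : ℝ ↦ poissonMeasure θ.toNNReal S) (Ici 0) := by
  lift S to Finset ℕ using hS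
  have hcont : Continuous fun θ ↦ ENNReal.ofReal (∑ k ∈ S, poissonWeight θ k) :=
    ENNReal.continuous_ofReal.comp (continuous_finsetSum _ fun k _ ↦ continuous_poissonWeight k)
  exact hcont.continuousOn.congr fun θ hθ ↦ poissonMeasure_coe_finset hθ S

lemma quasiconcaveOn_poissonMeasure {S : Set ℕ} (hS : S.OrdConnected) (hbdd : BddAbove S) :
    QuasiconcaveOn ℝ (Ici 0) fun θ : ℝ ↦ poissonMeasure θ.toNNReal S := by
  obtain ⟨a, b, hab, rfl⟩ : ∃ a b : ℕ, a ≤ b ∧ S = (Finset.Ico a b : Set ℕ) := by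
    rcases S.eq_empty_or_nonempty with rfl | hne
    · exact ⟨0, 0, le_rfl, by rw [Finset.Ico_self, Finset.coe_empty]⟩
    · have hIcc := (hne.ordConnected_iff_of_bdd (OrderBot.bddBelow S) hbdd).1 hS
      refine ⟨sInf S, sSup S + 1, ?_, ?_⟩
      · exact (csInf_le_csSup hne (OrderBot.bddBelow S) hbdd).trans (Nat.le_succ _)
      · rw [Finset.Ico_add_one_right_eq_Icc, Finset.coe_Icc, ← hIcc]
  have hmono := (quasiconcaveOn_sum_poissonWeight hab).monotone_comp ENNReal.ofReal_mono
  refine quasiconcaveOn_iff_min_le.2 ⟨convex_Ici 0, ?_⟩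
  intro x hx y hy c d hc hd hcd
  simp only [poissonMeasure_coe_finset hx, poissonMeasure_coe_finset hy,
    poissonMeasure_coe_finset (convex_Ici 0 hx hy hc hd hcd)]
  exact (quasiconcaveOn_iff_min_le.1 hmono).2 hx hy hc hd hcd

end PoissonWeight

section RateFunction

lemma ell_eq_klFun {γ a : ℝ} (hγ : 0 < γ) (ha : 0 ≤ a) :
    ell γ a = ENNReal.ofReal (γ * klFun (a / γ)) := by
  rw [ell, if_neg ha.not_gt, if_neg hγ.ne']
  rcases ha.eq_or_lt' with rfl | ha
  · simp [klFun_zero]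
  · rw [if_neg ha.ne', klFun_apply]
    congr 1
    field_simp
    ring

lemma ell_of_neg (γ : ℝ) {a : ℝ} (ha : a < 0) : ell γ a = ⊤ := if_pos ha

lemma continuousOn_ell {γ : ℝ} (hγ : 0 < γ) : ContinuousOn (ell γ) (Ici 0) := by
  have hcont : Continuous fun a ↦ ENNReal.ofReal (γ * klFun (a / γ)) :=
    ENNReal.continuous_ofReal.comp (by fun_prop)
  exact hcont.continuousOn.congr fun a ha ↦ ell_eq_klFun hγ ha

lemma ell_mul_mul {c : ℝ} (hc : 0 < c) (γ a : ℝ) :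
    ell (c * γ) (c * a) = ENNReal.ofReal c * ell γ a := by
  have hc_top : ENNReal.ofReal c * ⊤ = ⊤ := ENNReal.mul_top (by simpa using hc)
  simp only [ell, mul_neg_iff, hc, hc.not_gt, mul_eq_zero, hc.ne', mul_div_mul_left, ne_eq,
    not_false_eq_true, true_and, false_and, false_or, or_false, mul_ite, hc_top,
    ← ENNReal.ofReal_mul hc.le]
  ring_nf

lemma poissonWeight_eq_exp_klFun {θ : ℝ} (hθ : 0 < θ) (k : ℕ) :
    poissonWeight θ k = Real.exp (-(θ * klFun (k / θ))) * poissonWeight k k := by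
  rcases k.eq_zero_or_pos with rfl | hk
  · simp [poissonWeight, klFun_zero]
  · have hk : (0 : ℝ) < k := mod_cast hk
    have hpow : (θ / k) ^ k = Real.exp (-(k * Real.log (k / θ))) := by
      rw [← inv_div, inv_pow, Real.exp_neg, Real.exp_nat_mul, Real.exp_log (by positivity)]
    rw [poissonWeight_eq_mul hk.ne', hpow, ← Real.exp_add, klFun_apply]
    congr 2
    field_simp
    ring

-- Exponential tilting to the parameter `k`, for which the value `k` is typical.
lemma poissonMeasure_singleton_eq_exp_ell (θ : ℝ≥0) (k : ℕ) :
    poissonMeasure θ {k} = EReal.exp (-(ell θ k : EReal)) * poissonMeasure k {k} := by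
  rcases eq_or_ne θ 0 with rfl | hθ
  · rcases eq_or_ne k 0 with rfl | hk
    · simp [ell]
    · simp [ell, hk, poissonMeasure_singleton]
  · have hθ : (0 : ℝ) < θ := by positivity
    have hkl : 0 ≤ (θ : ℝ) * klFun (k / θ) := mul_nonneg hθ.le (klFun_nonneg (by positivity))
    have hw := poissonWeight_eq_exp_klFun hθ k
    simp only [poissonWeight] at hw
    rw [ell_eq_klFun hθ k.cast_nonneg, EReal.coe_ennreal_ofReal, max_eq_left hkl, ← EReal.coe_neg,
      EReal.exp_coe, poissonMeasure_singleton, poissonMeasure_singleton, hw,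
      ENNReal.ofReal_mul (Real.exp_nonneg _), NNReal.coe_natCast]

lemma factorial_le_exp_one_mul_sqrt_mul_pow {k : ℕ} (hk : k ≠ 0) :
    k ! ≤ Real.exp 1 * √k * (k / Real.exp 1) ^ k := by
  obtain ⟨k, rfl⟩ := Nat.exists_eq_succ_of_ne_zero hk
  have hstirling : Stirling.stirlingSeq k.succ ≤ Real.exp 1 / √2 :=
    Stirling.stirlingSeq_one ▸ Stirling.stirlingSeq'_antitone k.zero_le
  rw [Stirling.stirlingSeq, div_le_iff₀ (by positivity), Real.sqrt_mul zero_le_two] at hstirling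
  calc (k.succ ! : ℝ) ≤ Real.exp 1 / √2 * (√2 * √k.succ * (k.succ / Real.exp 1) ^ k.succ) :=
      hstirling
    _ = Real.exp 1 * √k.succ * (k.succ / Real.exp 1) ^ k.succ := by field_simp

lemma inv_le_poissonMeasure_natCast_singleton (k : ℕ) :
    (ENNReal.ofReal (Real.exp 1 * (k + 1)))⁻¹ ≤ poissonMeasure k {k} := by
  rw [← ENNReal.ofReal_inv_of_pos (by positivity), poissonMeasure_singleton, NNReal.coe_natCast]
  apply ENNReal.ofReal_le_ofReal
  rw [inv_le_iff_one_le_mul₀ (by positivity)]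
  rcases eq_or_ne k 0 with rfl | hk
  · simp
  · have hsqrt : √k ≤ k + 1 := Real.sqrt_le_iff.2 ⟨by positivity, by nlinarith⟩
    have hfact : k ! ≤ Real.exp 1 * (k + 1) * (k / Real.exp 1) ^ k :=
      (factorial_le_exp_one_mul_sqrt_mul_pow hk).trans (by gcongr)
    have hexp : (k / Real.exp 1) ^ k = Real.exp (-k) * (k : ℝ) ^ k := by
      rw [div_pow, ← Real.exp_nat_mul, mul_one, Real.exp_neg]
      ring
    rw [div_mul_eq_mul_div, one_le_div (by positivity), ← hexp]
    linarith

end RateFunction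

section LargeDeviations

lemma expGrowthSup_natCast : expGrowthSup (fun n : ℕ ↦ (n : ℝ≥0∞)) = 0 := by
  have hreal : Tendsto (fun n : ℕ ↦ Real.log n / n) atTop (𝓝 0) :=
    Real.isLittleO_log_id_atTop.tendsto_div_nhds_zero.comp tendsto_natCast_atTop_atTop
  refine ((EReal.tendsto_coe.2 hreal).congr' ?_).limsup_eq
  filter_upwards [eventually_ne_atTop 0] with n hn
  rw [EReal.coe_div, EReal.coe_coe_eq_natCast, ← ENNReal.ofReal_natCast,
    ENNReal.log_ofReal_of_pos (by positivity)]

lemma expGrowthInf_exp_mul_of_tendsto {u : ℕ → EReal} {l : EReal} (hu : Tendsto u atTop (𝓝 l)) :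
    expGrowthInf (fun n ↦ EReal.exp (u n * n)) = l := by
  refine (hu.congr' ?_).liminf_eq
  filter_upwards [eventually_ne_atTop 0] with n hn
  rw [EReal.log_exp, eq_comm,
    EReal.div_eq_iff (EReal.natCast_ne_bot n) (EReal.natCast_ne_top n) (Nat.cast_ne_zero.2 hn)]

/-- The law of `X / n`, where `X` is Poisson distributed with parameter `n * γ`, evaluated at
`A`. The arguments `n = 0` and `γ < 0` give junk values: the law is then the point mass at `0`. -/
noncomputable def poissonMeanProb (n : ℕ) (γ : ℝ) (A : Set ℝ) : ℝ≥0∞ :=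
  poissonMeasure (n * γ).toNNReal {k : ℕ | (k : ℝ) / n ∈ A}

variable {γ : ℝ} {A U : Set ℝ}

lemma poissonMeasure_natCast_mul_singleton {n : ℕ} (hn : n ≠ 0) (hγ : 0 ≤ γ) (k : ℕ) :
    poissonMeasure (n * γ).toNNReal {k} =
      EReal.exp (-(ell γ (k / n) : EReal) * n) * poissonMeasure k {k} := by
  have hn' : (0 : ℝ) < n := by positivity
  have hell : ell (n * γ) k = ENNReal.ofReal n * ell γ (k / n) := by
    rw [← ell_mul_mul hn', mul_div_cancel₀ _ hn'.ne']
  rw [poissonMeasure_singleton_eq_exp_ell, Real.coe_toNNReal _ (by positivity), hell,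
    EReal.coe_ennreal_mul, EReal.coe_ennreal_ofReal, max_eq_left hn'.le, EReal.coe_coe_eq_natCast,
    mul_comm (n : EReal), EReal.neg_mul]

lemma poissonMeasure_natCast_mul_singleton_le {n : ℕ} (hn : n ≠ 0) (hγ : 0 ≤ γ) {k : ℕ}
    (hk : (k : ℝ) / n ∈ A) :
    poissonMeasure (n * γ).toNNReal {k} ≤ EReal.exp (-(⨅ a ∈ A, (ell γ a : EReal)) * n) := by
  rw [poissonMeasure_natCast_mul_singleton hn hγ]
  refine (mul_le_of_le_one_right' prob_le_one).trans (EReal.exp_monotone ?_)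
  have hI : ⨅ a ∈ A, (ell γ a : EReal) ≤ ell γ (k / n) := iInf₂_le _ hk
  exact mul_le_mul_of_nonneg_right (EReal.neg_le_neg_iff.2 hI) (Nat.cast_nonneg' n)

lemma poissonMeanProb_le {n : ℕ} (hn : n ≠ 0) (hγ : 0 ≤ γ) {b : ℕ} (hb : ∀ a ∈ A, a ≤ b) :
    poissonMeanProb n γ A ≤
      (b + 1) * (n * EReal.exp (-(⨅ a ∈ A, (ell γ a : EReal)) * n)) := by
  set I := ⨅ a ∈ A, (ell γ a : EReal)
  have hsub : {k : ℕ | (k : ℝ) / n ∈ A} ⊆ Finset.range ((b + 1) * n) := fun k hk ↦ by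
    have hkn : (k : ℝ) ≤ b * n := (div_le_iff₀ (by positivity)).1 (hb _ hk)
    rw [Finset.mem_coe, Finset.mem_range, add_one_mul]
    exact lt_add_of_le_of_pos (mod_cast hkn) hn.bot_lt
  obtain ⟨T, hT⟩ := ((Finset.range ((b + 1) * n)).finite_toSet.subset hsub).exists_finset_coe
  have hcard : T.card ≤ (b + 1) * n := by
    have hTsub : T ⊆ Finset.range ((b + 1) * n) := Finset.coe_subset.1 (hT ▸ hsub)
    exact (Finset.card_le_card hTsub).trans_eq (Finset.card_range _)
  calc poissonMeanProb n γ A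
      = ∑ k ∈ T, poissonMeasure (n * γ).toNNReal {k} := by
        rw [sum_measure_singleton, hT, poissonMeanProb]
    _ ≤ T.card • EReal.exp (-I * n) :=
        Finset.sum_le_card_nsmul _ _ _ fun k hk ↦ poissonMeasure_natCast_mul_singleton_le hn hγ
          (hT ▸ Finset.mem_coe.2 hk : k ∈ {k : ℕ | (k : ℝ) / n ∈ A})
    _ ≤ ((b + 1) * n : ℕ) * EReal.exp (-I * n) := by
        rw [nsmul_eq_mul]
        gcongr
    _ = (b + 1) * (n * EReal.exp (-I * n)) := by
        push_cast
        ring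

lemma expGrowthSup_poissonMeanProb_le (hγ : 0 ≤ γ) (hA : BddAbove A) :
    expGrowthSup (fun n ↦ poissonMeanProb n γ A) ≤ -⨅ a ∈ A, (ell γ a : EReal) := by
  obtain ⟨r, hr⟩ := hA
  obtain ⟨b, hb⟩ := exists_nat_ge r
  have hle : ∀ᶠ n : ℕ in atTop, poissonMeanProb n γ A ≤
      (b + 1 : ℝ≥0∞) * (n * EReal.exp (-(⨅ a ∈ A, (ell γ a : EReal)) * n)) := by
    filter_upwards [eventually_ne_atTop 0] with n hn
    exact poissonMeanProb_le hn hγ fun a ha ↦ (hr ha).trans hb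
  calc expGrowthSup (fun n ↦ poissonMeanProb n γ A)
      ≤ expGrowthSup (fun n : ℕ ↦ (n * EReal.exp (-(⨅ a ∈ A, (ell γ a : EReal)) * n) : ℝ≥0∞)) :=
        expGrowthSup_le_of_eventually_le (by finiteness) hle
    _ ≤ expGrowthSup (fun n : ℕ ↦ (n : ℝ≥0∞)) +
          expGrowthSup (fun n : ℕ ↦ EReal.exp (-(⨅ a ∈ A, (ell γ a : EReal)) * n)) :=
        expGrowthSup_mul_le (by simp [expGrowthSup_natCast]) (by simp [expGrowthSup_natCast])
    _ = -⨅ a ∈ A, (ell γ a : EReal) := by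
        rw [expGrowthSup_natCast, expGrowthSup_exp, zero_add]

lemma inv_mul_exp_le_poissonMeanProb {n k : ℕ} (hn : n ≠ 0) (hγ : 0 ≤ γ) (hk : (k : ℝ) / n ∈ A)
    {a : ℝ} (ha : (k : ℝ) / n ≤ a) :
    (ENNReal.ofReal (Real.exp 1 * (a + 1)))⁻¹ *
      ((n : ℝ≥0∞)⁻¹ * EReal.exp (-(ell γ (k / n) : EReal) * n)) ≤ poissonMeanProb n γ A := by
  have hk_le : Real.exp 1 * (k + 1) ≤ Real.exp 1 * (a + 1) * n := by
    have hn1 : (1 : ℝ) ≤ n := mod_cast Nat.one_le_iff_ne_zero.2 hn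
    have hkn : (k : ℝ) ≤ a * n := (div_le_iff₀ (by positivity)).1 ha
    rw [mul_assoc, add_one_mul]
    gcongr
  have ha0 : 0 ≤ a := le_trans (by positivity) ha
  calc (ENNReal.ofReal (Real.exp 1 * (a + 1)))⁻¹ *
        ((n : ℝ≥0∞)⁻¹ * EReal.exp (-(ell γ (k / n) : EReal) * n))
      = (ENNReal.ofReal (Real.exp 1 * (a + 1) * n))⁻¹ *
          EReal.exp (-(ell γ (k / n) : EReal) * n) := by
        rw [ENNReal.ofReal_mul (q := n) (by positivity), ENNReal.ofReal_natCast, ← mul_assoc,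
          ENNReal.mul_inv (by simp) (by simp)]
    _ ≤ (ENNReal.ofReal (Real.exp 1 * (k + 1)))⁻¹ * EReal.exp (-(ell γ (k / n) : EReal) * n) := by
        gcongr
    _ ≤ poissonMeasure k {k} * EReal.exp (-(ell γ (k / n) : EReal) * n) := by
        gcongr
        exact inv_le_poissonMeasure_natCast_singleton k
    _ = poissonMeasure (n * γ).toNNReal {k} := by
        rw [poissonMeasure_natCast_mul_singleton hn hγ, mul_comm]
    _ ≤ poissonMeanProb n γ A := measure_mono (singleton_subset_iff.2 hk)

lemma tendsto_ell_natFloor_mul_div (hγ : 0 ≤ γ) {a : ℝ} (ha0 : 0 ≤ a) (ha : ell γ a ≠ ⊤) :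
    Tendsto (fun n : ℕ ↦ ell γ (⌊a * n⌋₊ / n)) atTop (𝓝 (ell γ a)) := by
  rcases hγ.eq_or_lt with rfl | hγ
  · obtain rfl : a = 0 := by
      by_contra hne
      exact ha (by simp [ell, hne])
    simp
  · have hfloor : Tendsto (fun n : ℕ ↦ (⌊a * n⌋₊ : ℝ) / n) atTop (𝓝[Ici 0] a) :=
      tendsto_nhdsWithin_iff.2 ⟨(tendsto_nat_floor_mul_div_atTop ha0).comp
        tendsto_natCast_atTop_atTop, .of_forall fun n ↦ mem_Ici.2 (by positivity)⟩
    exact (continuousOn_ell hγ a ha0).tendsto.comp hfloor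

lemma neg_ell_le_expGrowthInf_poissonMeanProb (hγ : 0 ≤ γ) (hU : IsOpen U) {a : ℝ} (ha : a ∈ U) :
    -(ell γ a : EReal) ≤ expGrowthInf (fun n ↦ poissonMeanProb n γ U) := by
  rcases eq_or_ne (ell γ a) ⊤ with htop | htop
  · simp [htop]
  have ha0 : 0 ≤ a := not_lt.1 (mt (ell_of_neg γ) htop)
  have hfloor : Tendsto (fun n : ℕ ↦ (⌊a * n⌋₊ : ℝ) / n) atTop (𝓝 a) :=
    (tendsto_nat_floor_mul_div_atTop ha0).comp tendsto_natCast_atTop_atTop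
  have hrate : Tendsto (fun n : ℕ ↦ -(ell γ (⌊a * n⌋₊ / n) : EReal)) atTop (𝓝 (-ell γ a)) :=
    ((continuous_coe_ennreal_ereal.tendsto _).comp
      (tendsto_ell_natFloor_mul_div hγ ha0 htop)).neg
  have hge : ∀ᶠ n : ℕ in atTop, (ENNReal.ofReal (Real.exp 1 * (a + 1)))⁻¹ *
      ((n : ℝ≥0∞)⁻¹ * EReal.exp (-(ell γ (⌊a * n⌋₊ / n) : EReal) * n)) ≤
        poissonMeanProb n γ U := by
    filter_upwards [eventually_ne_atTop 0, hfloor.eventually_mem (hU.mem_nhds ha)] with n hn hmem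
    refine inv_mul_exp_le_poissonMeanProb hn hγ hmem ?_
    exact (div_le_iff₀ (by positivity)).2 (Nat.floor_le (by positivity))
  calc -(ell γ a : EReal)
      = expGrowthInf (fun n : ℕ ↦ (n : ℝ≥0∞))⁻¹ +
          expGrowthInf (fun n : ℕ ↦ EReal.exp (-(ell γ (⌊a * n⌋₊ / n) : EReal) * n)) := by
        rw [expGrowthInf_inv, expGrowthSup_natCast, neg_zero, zero_add,
          expGrowthInf_exp_mul_of_tendsto hrate]
    _ ≤ expGrowthInf (fun n : ℕ ↦
          (n : ℝ≥0∞)⁻¹ * EReal.exp (-(ell γ (⌊a * n⌋₊ / n) : EReal) * n)) := le_expGrowthInf_mul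
    _ ≤ expGrowthInf (fun n ↦ poissonMeanProb n γ U) :=
        expGrowthInf_of_eventually_ge (by simp) hge

theorem tendsto_log_poissonMeanProb_div (hγ : 0 ≤ γ) (hU : IsOpen U) (hbdd : BddAbove U) :
    Tendsto (fun n ↦ ENNReal.log (poissonMeanProb n γ U) / n) atTop
      (𝓝 (-⨅ a ∈ U, (ell γ a : EReal))) := by
  refine tendsto_of_le_liminf_of_limsup_le ?_ (expGrowthSup_poissonMeanProb_le hγ hbdd)
  refine EReal.neg_le.1 (le_iInf₂ fun a ha ↦ EReal.neg_le.1 ?_)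
  exact neg_ell_le_expGrowthInf_poissonMeanProb hγ hU ha

end LargeDeviations

section Interval

variable {n : ℕ} {A : Set ℝ}

lemma bddAbove_setOf_div_mem (hn : n ≠ 0) (hA : BddAbove A) :
    BddAbove {k : ℕ | (k : ℝ) / n ∈ A} := by
  obtain ⟨b, hb⟩ := hA
  refine ⟨⌊b * n⌋₊, fun k hk ↦ Nat.le_floor ?_⟩
  exact (div_le_iff₀ (by positivity)).1 (hb hk)

lemma quasiconcaveOn_poissonMeanProb (hn : n ≠ 0) (hA : A.OrdConnected) (hbdd : BddAbove A) :
    QuasiconcaveOn ℝ (Ici 0) (poissonMeanProb n · A) := by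
  have hmono : Monotone fun k : ℕ ↦ (k : ℝ) / n := fun k l hkl ↦ by
    dsimp only
    gcongr
  have hqc : QuasiconcaveOn ℝ (Ici 0)
      fun θ : ℝ ↦ poissonMeasure θ.toNNReal {k : ℕ | (k : ℝ) / n ∈ A} :=
    quasiconcaveOn_poissonMeasure (hA.preimage_mono hmono) (bddAbove_setOf_div_mem hn hbdd)
  refine quasiconcaveOn_iff_min_le.2 ⟨convex_Ici 0, fun x hx y hy c d hc hd hcd ↦ ?_⟩
  have hscale : ∀ {z : ℝ}, z ∈ Ici 0 → n * z ∈ Ici (0 : ℝ) := fun hz ↦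
    mem_Ici.2 (mul_nonneg n.cast_nonneg hz)
  have hmin := (quasiconcaveOn_iff_min_le.1 hqc).2 (hscale hx) (hscale hy) hc hd hcd
  simpa only [poissonMeanProb, smul_eq_mul, mul_add, mul_left_comm] using hmin

lemma continuousOn_poissonMeanProb (hn : n ≠ 0) (hbdd : BddAbove A) :
    ContinuousOn (poissonMeanProb n · A) (Ici 0) :=
  (continuousOn_poissonMeasure (bddAbove_setOf_div_mem hn hbdd).finite).comp
    (by fun_prop) fun _ hx ↦ mem_Ici.2 (mul_nonneg n.cast_nonneg hx)

lemma continuous_ereal_div_natCast (n : ℕ) : Continuous fun y : EReal ↦ y / n := by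
  have hinv : (n : EReal)⁻¹ = ((n : ℝ)⁻¹ : ℝ) := by rw [EReal.coe_inv, EReal.coe_coe_eq_natCast]
  simp only [div_eq_mul_inv, hinv]
  exact continuous_iff_continuousAt.2 fun y ↦ EReal.Tendsto.mul_const tendsto_id
    (.inr (EReal.coe_ne_bot _)) (.inr (EReal.coe_ne_top _))

theorem iInf_log_poissonMeanProb_div_eq_min (hn : n ≠ 0) (hA : A.OrdConnected) (hbdd : BddAbove A)
    {lam ε : ℝ} (hlam : 0 ≤ lam) (hε : 0 < ε) :
    ⨅ γ ∈ Ioo (lam - ε) (lam + ε) ∩ Ici 0, ENNReal.log (poissonMeanProb n γ A) / n =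
      min (ENNReal.log (poissonMeanProb n (max 0 (lam - ε)) A) / n)
        (ENNReal.log (poissonMeanProb n (lam + ε) A) / n) := by
  have hcont : Continuous fun p : ℝ≥0∞ ↦ ENNReal.log p / n :=
    (continuous_ereal_div_natCast n).comp ENNReal.continuous_log
  have hmono : Monotone fun p : ℝ≥0∞ ↦ ENNReal.log p / n :=
    (EReal.monotone_div_right_of_nonneg (Nat.cast_nonneg' n)).comp ENNReal.log_monotone
  refine iInf_eq_min_of_quasiconcaveOn (max_lt (by linarith) (by linarith))
    ((quasiconcaveOn_poissonMeanProb hn hA hbdd).monotone_comp hmono)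
    (hcont.comp_continuousOn (continuousOn_poissonMeanProb hn hbdd)) ?_ ?_ ?_
  · exact fun γ hγ ↦ (le_max_left _ _).trans hγ.1
  · exact fun γ hγ ↦ ⟨⟨(le_max_right _ _).trans_lt hγ.1, hγ.2⟩, (le_max_left _ _).trans hγ.1.le⟩
  · exact fun γ hγ ↦ ⟨max_le hγ.2 hγ.1.1.le, hγ.1.2.le⟩

end Interval

theorem stmt15 (x δ lam ε : ℝ) (hδ : 0 < δ) (hlam : 0 ≤ lam) (hε : 0 < ε) :
    Filter.Tendsto
      (fun n : ℕ => ⨅ γ ∈ Set.Ioo (lam - ε) (lam + ε) ∩ Set.Ici (0 : ℝ),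
        ((n : ℝ)⁻¹ : EReal) *
          ENNReal.log (ProbabilityTheory.poissonMeasure (Real.toNNReal ((n : ℝ) * γ))
            {k : ℕ | |(k : ℝ) / (n : ℝ) - x| < δ}))
      Filter.atTop
      (nhds (min
        (-(⨅ a ∈ Set.Ioo (x - δ) (x + δ), (ell (max 0 (lam - ε)) a : EReal)))
        (-(⨅ a ∈ Set.Ioo (x - δ) (x + δ), (ell (lam + ε) a : EReal))))) := by
  have hlim : ∀ γ, 0 ≤ γ →
      Tendsto (fun n ↦ ENNReal.log (poissonMeanProb n γ (Ioo (x - δ) (x + δ))) / n) atTop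
        (𝓝 (-⨅ a ∈ Ioo (x - δ) (x + δ), (ell γ a : EReal))) := fun γ hγ ↦
    tendsto_log_poissonMeanProb_div hγ isOpen_Ioo bddAbove_Ioo
  refine ((hlim _ (le_max_left 0 (lam - ε))).min (hlim (lam + ε) (by linarith))).congr' ?_
  filter_upwards [eventually_ne_atTop 0] with n hn
  rw [← iInf_log_poissonMeanProb_div_eq_min hn ordConnected_Ioo bddAbove_Ioo hlam hε]
  have hball : {k : ℕ | |(k : ℝ) / n - x| < δ} = {k : ℕ | (k : ℝ) / n ∈ Ioo (x - δ) (x + δ)} := by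
    rw [← Real.ball_eq_Ioo]
    rfl
  simp only [hball, poissonMeanProb, EReal.div_eq_inv_mul, EReal.coe_coe_eq_natCast]
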